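/- arXiv:1212.3509 — 2 statements merged into one kernel-verified Lean document; each statement's English description precedes it below -/
import Mathlib

section
/- Let C = Π_{j=1}^3 [a_j, b_j] ⊂ ℝ³ with 0 < a_j < b_j for each j, and define f̃ : ℝ → ℝ by f̃(t) = ∫_C x₁ cosh(t) sinh²(t) exp(−sinh²(t)(x₁² + x₂² + x₃²)) dx. Then f̃ has double exponential decay on the real axis: there exist constants C₀ > 0 and β > 0 such that |f̃(t)| ≤ C₀ exp(−β e^{2|t|}) for all t ∈ ℝ. -/
open MeasureTheory Real

/-!
A set at positive distance from the origin has `∑ xⱼ² ≥ c > 0`. As `sinh² t = cosh² t - 1`,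
the Gaussian factor is at most `exp c * exp (-c * cosh² t)`. The prefactor `cosh t * sinh² t`
is at most `(cosh² t)²`, which is absorbed by an arbitrarily small part `δ` of the rate `c`.
Finally `e^{2|t|} ≤ 4 cosh² t` turns the remaining rate `c - δ` into double exponential decay.
-/

lemma pow_le_factorial_div_pow_mul_exp {δ y : ℝ} (hδ : 0 < δ) (hy : 0 ≤ y) (n : ℕ) :
    y ^ n ≤ n.factorial / δ ^ n * exp (δ * y) := by
  have h := pow_div_factorial_le_exp (δ * y) (by positivity) n
  rw [div_le_iff₀ (by positivity), mul_pow] at h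
  rw [div_mul_eq_mul_div, le_div_iff₀ (by positivity)]
  linarith

lemma exp_abs_le_two_mul_cosh (t : ℝ) : exp |t| ≤ 2 * cosh t := by
  rw [← cosh_abs, cosh_eq]
  linarith [exp_pos (-|t|)]

lemma exp_two_mul_abs_le_four_mul_cosh_sq (t : ℝ) : exp (2 * |t|) ≤ 4 * cosh t ^ 2 :=
  calc exp (2 * |t|) = exp |t| ^ 2 := by rw [← exp_nat_mul, Nat.cast_ofNat]
    _ ≤ (2 * cosh t) ^ 2 := by gcongr; exact exp_abs_le_two_mul_cosh t
    _ = 4 * cosh t ^ 2 := by ring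

lemma cosh_mul_sinh_sq_le (t : ℝ) : cosh t * sinh t ^ 2 ≤ (cosh t ^ 2) ^ 2 := by
  have hcosh : cosh t ≤ cosh t ^ 2 := le_self_pow₀ (one_le_cosh t) two_ne_zero
  have hsinh : sinh t ^ 2 ≤ cosh t ^ 2 := by linarith [cosh_sq t]
  rw [sq (cosh t ^ 2)]
  gcongr

lemma cosh_mul_sinh_sq_mul_exp_le {c δ : ℝ} (hδ : 0 < δ) (hδc : δ ≤ c) (t : ℝ) :
    cosh t * sinh t ^ 2 * exp (-(sinh t ^ 2) * c) ≤
      2 / δ ^ 2 * exp c * exp (-((c - δ) / 4) * exp (2 * |t|)) := by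
  set y := cosh t ^ 2 with hy
  have hsq : y ^ 2 ≤ 2 / δ ^ 2 * exp (δ * y) := by
    simpa using pow_le_factorial_div_pow_mul_exp hδ (sq_nonneg (cosh t)) 2
  have hrate : (c - δ) / 4 * exp (2 * |t|) ≤ (c - δ) * y := by
    nlinarith [mul_le_mul_of_nonneg_left (exp_two_mul_abs_le_four_mul_cosh_sq t)
      (sub_nonneg.2 hδc)]
  calc cosh t * sinh t ^ 2 * exp (-(sinh t ^ 2) * c)
      ≤ y ^ 2 * exp (-(sinh t ^ 2) * c) := by gcongr; exact cosh_mul_sinh_sq_le t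
    _ ≤ 2 / δ ^ 2 * exp (δ * y) * exp (-(sinh t ^ 2) * c) := by gcongr
    _ = 2 / δ ^ 2 * exp c * exp (-((c - δ) * y)) := by
      rw [mul_assoc, mul_assoc, ← exp_add, ← exp_add, sinh_sq, ← hy]
      ring_nf
    _ ≤ 2 / δ ^ 2 * exp c * exp (-((c - δ) / 4) * exp (2 * |t|)) := by
      gcongr
      linarith

lemma abs_integral_mul_cosh_mul_sinh_sq_mul_exp_le {X : Type*} [MeasurableSpace X]
    {μ : Measure X} {w q : X → ℝ} {c δ : ℝ} (hw : Integrable w μ) (hq : ∀ᵐ x ∂μ, c ≤ q x)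
    (hδ : 0 < δ) (hδc : δ ≤ c) (t : ℝ) :
    |∫ x, w x * cosh t * sinh t ^ 2 * exp (-(sinh t ^ 2) * q x) ∂μ| ≤
      (∫ x, |w x| ∂μ) * (2 / δ ^ 2 * exp c * exp (-((c - δ) / 4) * exp (2 * |t|))) := by
  rw [← integral_mul_const, ← norm_eq_abs]
  refine norm_integral_le_of_norm_le (hw.abs.mul_const _) (hq.mono fun x hx => ?_)
  calc ‖w x * cosh t * sinh t ^ 2 * exp (-(sinh t ^ 2) * q x)‖
      = |w x| * (cosh t * sinh t ^ 2 * exp (-(sinh t ^ 2) * q x)) := by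
        rw [mul_assoc, mul_assoc, norm_mul, ← mul_assoc (cosh t), norm_eq_abs,
          norm_of_nonneg (by positivity)]
    _ ≤ |w x| * (cosh t * sinh t ^ 2 * exp (-(sinh t ^ 2) * c)) := by
        gcongr |w x| * (_ * exp ?_)
        exact mul_le_mul_of_nonpos_left hx (neg_nonpos.2 (sq_nonneg _))
    _ ≤ |w x| * (2 / δ ^ 2 * exp c * exp (-((c - δ) / 4) * exp (2 * |t|))) :=
        mul_le_mul_of_nonneg_left (cosh_mul_sinh_sq_mul_exp_le hδ hδc t) (abs_nonneg _)

lemma pi_norm_sq_le_sum_sq {ι : Type*} [Fintype ι] (x : ι → ℝ) : ‖x‖ ^ 2 ≤ ∑ j, x j ^ 2 := by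
  rw [← le_sqrt (norm_nonneg x) (by positivity), pi_norm_le_iff_of_nonneg (sqrt_nonneg _)]
  exact fun j => abs_le_sqrt <|
    Finset.single_le_sum (f := fun j => x j ^ 2) (fun _ _ => sq_nonneg _) (Finset.mem_univ j)

lemma exists_pos_le_sum_sq_of_zero_notMem_closure {ι : Type*} [Fintype ι] {K : Set (ι → ℝ)}
    (hK : 0 ∉ closure K) : ∃ c > 0, ∀ x ∈ K, c ≤ ∑ j, x j ^ 2 := by
  obtain ⟨r, hr, hrK⟩ : ∃ r > 0, ∀ x ∈ K, r ≤ ‖x‖ := by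
    simpa [Metric.mem_closure_iff] using hK
  refine ⟨r ^ 2, by positivity, fun x hx => ?_⟩
  exact (pow_le_pow_left₀ hr.le (hrK x hx) 2).trans (pi_norm_sq_le_sum_sq x)

theorem transformed_integrand_double_exponential_decay_general {ι : Type*} [Fintype ι]
    {μ : Measure (ι → ℝ)} {K : Set (ι → ℝ)} {w : (ι → ℝ) → ℝ} (hK : MeasurableSet K)
    (h0 : 0 ∉ closure K) (hw : IntegrableOn w K μ) :
    ∃ C₀ > 0, ∃ β > 0, ∀ t : ℝ,
      |∫ x in K, w x * cosh t * sinh t ^ 2 * exp (-(sinh t ^ 2) * (∑ j, x j ^ 2)) ∂μ|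
        ≤ C₀ * exp (-β * exp (2 * |t|)) := by
  obtain ⟨c, hc, hcK⟩ := exists_pos_le_sum_sq_of_zero_notMem_closure h0
  have hbound := abs_integral_mul_cosh_mul_sinh_sq_mul_exp_le hw
    (ae_restrict_of_forall_mem hK hcK) (half_pos hc) (half_le_self hc.le)
  -- The summand `1` keeps the constant positive when `w` vanishes on `K`.
  refine ⟨((∫ x in K, |w x| ∂μ) + 1) * (2 / (c / 2) ^ 2 * exp c), by positivity,
    (c - c / 2) / 4, by linarith, fun t => (hbound t).trans ?_⟩
  rw [← mul_assoc]
  gcongr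
  exact le_add_of_nonneg_right zero_le_one

/-- Double exponential decay of the transformed integrand
`f̃(t) = ∫_C x₁ cosh(t) sinh²(t) exp(−sinh²(t)‖x‖²) dx` on the real axis:
there are `C₀ > 0`, `β > 0` with `|f̃(t)| ≤ C₀ exp(−β e^{2|t|})` for all `t`. -/
theorem transformed_integrand_double_exponential_decay (a b : Fin 3 → ℝ)
    (hab : ∀ j, 0 < a j ∧ a j < b j) :
    ∃ C₀ > 0, ∃ β > 0, ∀ t : ℝ,
      |∫ x in Set.univ.pi fun j => Set.Icc (a j) (b j),
          x 0 * Real.cosh t * Real.sinh t ^ 2 *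
            Real.exp (-(Real.sinh t ^ 2) * (∑ j, x j ^ 2))|
        ≤ C₀ * Real.exp (-β * Real.exp (2 * |t|)) := by
  have hclosed : IsClosed (Set.univ.pi fun j => Set.Icc (a j) (b j)) :=
    isClosed_set_pi fun _ _ => isClosed_Icc
  refine transformed_integrand_double_exponential_decay_general hclosed.measurableSet ?_
    ((continuous_apply 0).continuousOn.integrableOn_compact
      (isCompact_univ_pi fun _ => isCompact_Icc))
  rw [hclosed.closure_eq]
  exact fun h => (hab 0).1.not_ge (h 0 trivial).1
end

section
/- Fix mode sizes (n₁,n₂,n₃) and ranks (r₁,r₂,r₃), and let T ⊆ ℝ^{n₁×n₂×n₃} be the set of tensors whose j-mode unfoldings have rank at most r_j for j = 1,2,3. Then for every X ∈ ℝ^{n₁×n₂×n₃} there exists X_best ∈ T such that ‖X − X_best‖_F ≤ ‖X − Y‖_F for all Y ∈ T, i.e. a best Tucker approximation with prescribed multilinear ranks always exists. -/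
open Finset

/-!
Matrix rank is lower semicontinuous, since linear independence of finitely many vectors is an open
condition. Hence tensors of bounded multilinear rank form a closed set, and it contains `0`. The
Frobenius distance is the Euclidean distance of the vectorized tensors, and in a proper space every
nonempty closed set contains a point nearest to a given one.
-/

theorem exists_mem_forall_dist_le {α : Type*} [PseudoMetricSpace α] [ProperSpace α] {s : Set α}
    (hs : IsClosed s) (hne : s.Nonempty) (x : α) : ∃ y ∈ s, ∀ z ∈ s, dist x y ≤ dist x z := by
  obtain ⟨y, hys, hy⟩ := hs.exists_infDist_eq_dist hne x
  exact ⟨y, hys, fun z hz => hy ▸ Metric.infDist_le_dist_of_mem hz⟩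

theorem properSpace_piLp (p : ENNReal) [Fact (1 ≤ p)] {ι : Type*} [Fintype ι] (β : ι → Type*)
    [∀ i, MetricSpace (β i)] [∀ i, ProperSpace (β i)] : ProperSpace (PiLp p β) :=
  (PiLp.antilipschitzWith_toLp p β).properSpace (PiLp.continuous_toLp p β)
    (WithLp.toLp_surjective p)

theorem natCast_le_rank_mulVecLin_iff {K m n : Type*} [Field K] [Fintype n] (A : Matrix m n K)
    (k : ℕ) : (k : Cardinal) ≤ A.mulVecLin.rank ↔ k ≤ A.rank := by
  rw [LinearMap.rank, ← Module.finrank_eq_rank, Nat.cast_le, Matrix.rank]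

section RankClosed

variable {𝕜 m n : Type*} [NontriviallyNormedField 𝕜] [CompleteSpace 𝕜] [Finite m] [Fintype n]

theorem isOpen_setOfPred_le_matrix_rank (k : ℕ) : IsOpen {A : Matrix m n 𝕜 | k ≤ A.rank} := by
  have := Fintype.ofFinite m
  simp only [← natCast_le_rank_mulVecLin_iff, LinearMap.le_rank_iff_exists_linearIndependent_finset,
    Set.ofPred_exists, ← exists_prop, Matrix.mulVecLin_apply]
  refine isOpen_biUnion fun t _ => ?_
  have mulVec_continuous : Continuous fun (A : Matrix m n 𝕜) (v : (t : Set (n → 𝕜))) =>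
      A.mulVec (v : n → 𝕜) := by fun_prop
  exact isOpen_setOfPred_linearIndependent.preimage mulVec_continuous

theorem isClosed_setOfPred_matrix_rank_le (r : ℕ) : IsClosed {A : Matrix m n 𝕜 | A.rank ≤ r} := by
  simpa only [← isOpen_compl_iff, Set.compl_ofPred, not_le, Nat.succ_le_iff] using
    isOpen_setOfPred_le_matrix_rank (r + 1)

end RankClosed

section Tensor

variable {𝕜 n₁ n₂ n₃ : Type*}

/-- The 1-mode unfolding of an order-3 tensor, with columns indexed by pairs `(i₂, i₃)`. -/
def modeOneUnfolding (Y : n₁ → n₂ → n₃ → 𝕜) : Matrix n₁ (n₂ × n₃) 𝕜 :=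
  Matrix.of fun i₁ p => Y i₁ p.1 p.2

/-- The 2-mode unfolding of an order-3 tensor, with columns indexed by pairs `(i₁, i₃)`. -/
def modeTwoUnfolding (Y : n₁ → n₂ → n₃ → 𝕜) : Matrix n₂ (n₁ × n₃) 𝕜 :=
  Matrix.of fun i₂ p => Y p.1 i₂ p.2

/-- The 3-mode unfolding of an order-3 tensor, with columns indexed by pairs `(i₁, i₂)`. -/
def modeThreeUnfolding (Y : n₁ → n₂ → n₃ → 𝕜) : Matrix n₃ (n₁ × n₂) 𝕜 :=
  Matrix.of fun i₃ p => Y p.1 p.2 i₃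

/-- Vectorization of order-3 tensors. Its values lie in `EuclideanSpace`, so that their distance
is the Frobenius distance. -/
def tensorVec [TopologicalSpace 𝕜] :
    (n₁ → n₂ → n₃ → 𝕜) ≃ₜ EuclideanSpace 𝕜 (n₁ × n₂ × n₃) where
  toFun Y := WithLp.toLp 2 fun p => Y p.1 p.2.1 p.2.2
  invFun y i₁ i₂ i₃ := y (i₁, i₂, i₃)
  left_inv _ := rfl
  right_inv _ := rfl
  continuous_toFun := by fun_prop
  continuous_invFun := by fun_prop

variable [Fintype n₁] [Fintype n₂] [Fintype n₃]

/-- The order-3 tensors of multilinear rank at most `(r₁, r₂, r₃)`, the feasible set of Tucker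
approximation. -/
def multilinearRankLE [CommSemiring 𝕜] (r₁ r₂ r₃ : ℕ) : Set (n₁ → n₂ → n₃ → 𝕜) :=
  {Y | (modeOneUnfolding Y).rank ≤ r₁ ∧ (modeTwoUnfolding Y).rank ≤ r₂ ∧
    (modeThreeUnfolding Y).rank ≤ r₃}

/-- The distance `‖X - Y‖_F`. It differs from `dist X Y`, which is the sup distance on functions. -/
noncomputable def frobeniusDist [Norm 𝕜] [Sub 𝕜] (X Y : n₁ → n₂ → n₃ → 𝕜) : ℝ :=
  √(∑ i₁, ∑ i₂, ∑ i₃, ‖X i₁ i₂ i₃ - Y i₁ i₂ i₃‖ ^ 2)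

theorem zero_mem_multilinearRankLE [CommSemiring 𝕜] [Nontrivial 𝕜] (r₁ r₂ r₃ : ℕ) :
    (0 : n₁ → n₂ → n₃ → 𝕜) ∈ multilinearRankLE r₁ r₂ r₃ := by
  refine ⟨?_, ?_, ?_⟩ <;> exact Matrix.rank_zero.trans_le (Nat.zero_le _)

theorem isClosed_multilinearRankLE [NontriviallyNormedField 𝕜] [CompleteSpace 𝕜] (r₁ r₂ r₃ : ℕ) :
    IsClosed (multilinearRankLE r₁ r₂ r₃ : Set (n₁ → n₂ → n₃ → 𝕜)) := by
  have modeOne_continuous : Continuous (modeOneUnfolding : (n₁ → n₂ → n₃ → 𝕜) → _) :=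
    continuous_matrix fun _ _ => by unfold modeOneUnfolding; fun_prop
  have modeTwo_continuous : Continuous (modeTwoUnfolding : (n₁ → n₂ → n₃ → 𝕜) → _) :=
    continuous_matrix fun _ _ => by unfold modeTwoUnfolding; fun_prop
  have modeThree_continuous : Continuous (modeThreeUnfolding : (n₁ → n₂ → n₃ → 𝕜) → _) :=
    continuous_matrix fun _ _ => by unfold modeThreeUnfolding; fun_prop
  exact ((isClosed_setOfPred_matrix_rank_le r₁).preimage modeOne_continuous).inter
    (((isClosed_setOfPred_matrix_rank_le r₂).preimage modeTwo_continuous).inter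
      ((isClosed_setOfPred_matrix_rank_le r₃).preimage modeThree_continuous))

theorem dist_tensorVec [SeminormedAddCommGroup 𝕜] (X Y : n₁ → n₂ → n₃ → 𝕜) :
    dist (tensorVec X) (tensorVec Y) = frobeniusDist X Y := by
  rw [PiLp.dist_eq_of_L2]
  simp only [frobeniusDist, Fintype.sum_prod_type, dist_eq_norm]
  rfl

theorem best_tucker_approximation_exists_general [NontriviallyNormedField 𝕜] [ProperSpace 𝕜]
    (r₁ r₂ r₃ : ℕ) (X : n₁ → n₂ → n₃ → 𝕜) :
    ∃ Xbest ∈ multilinearRankLE r₁ r₂ r₃, ∀ Y ∈ multilinearRankLE r₁ r₂ r₃,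
      frobeniusDist X Xbest ≤ frobeniusDist X Y := by
  have : ProperSpace (EuclideanSpace 𝕜 (n₁ × n₂ × n₃)) := properSpace_piLp 2 _
  let S : Set (n₁ → n₂ → n₃ → 𝕜) := multilinearRankLE r₁ r₂ r₃
  have image_closed : IsClosed (tensorVec '' S) :=
    tensorVec.isClosed_image.2 (isClosed_multilinearRankLE r₁ r₂ r₃)
  have image_nonempty : (tensorVec '' S).Nonempty :=
    Set.Nonempty.image _ ⟨0, zero_mem_multilinearRankLE r₁ r₂ r₃⟩
  obtain ⟨_, ⟨Xbest, hXbest, rfl⟩, hmin⟩ :=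
    exists_mem_forall_dist_le image_closed image_nonempty (tensorVec X)
  refine ⟨Xbest, hXbest, fun Y hY => ?_⟩
  simpa only [dist_tensorVec] using hmin _ (Set.mem_image_of_mem tensorVec hY)

end Tensor

/-- Existence of a best Tucker approximation with prescribed multilinear ranks:
for every order-3 tensor `X` there is a tensor `X_best` whose `j`-mode unfoldings
have rank at most `r_j` and which minimizes the Frobenius distance to `X` among
all such tensors. -/
theorem best_tucker_approximation_exists (n₁ n₂ n₃ r₁ r₂ r₃ : ℕ)
    (X : Fin n₁ → Fin n₂ → Fin n₃ → ℝ) :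
    ∃ Xbest ∈ {Y : Fin n₁ → Fin n₂ → Fin n₃ → ℝ |
        (Matrix.of fun i₁ (p : Fin n₂ × Fin n₃) => Y i₁ p.1 p.2).rank ≤ r₁ ∧
        (Matrix.of fun i₂ (p : Fin n₁ × Fin n₃) => Y p.1 i₂ p.2).rank ≤ r₂ ∧
        (Matrix.of fun i₃ (p : Fin n₁ × Fin n₂) => Y p.1 p.2 i₃).rank ≤ r₃},
      ∀ Y ∈ {Y : Fin n₁ → Fin n₂ → Fin n₃ → ℝ |
        (Matrix.of fun i₁ (p : Fin n₂ × Fin n₃) => Y i₁ p.1 p.2).rank ≤ r₁ ∧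
        (Matrix.of fun i₂ (p : Fin n₁ × Fin n₃) => Y p.1 i₂ p.2).rank ≤ r₂ ∧
        (Matrix.of fun i₃ (p : Fin n₁ × Fin n₂) => Y p.1 p.2 i₃).rank ≤ r₃},
      Real.sqrt (∑ i₁ : Fin n₁, ∑ i₂ : Fin n₂, ∑ i₃ : Fin n₃,
          (X i₁ i₂ i₃ - Xbest i₁ i₂ i₃) ^ 2) ≤
        Real.sqrt (∑ i₁ : Fin n₁, ∑ i₂ : Fin n₂, ∑ i₃ : Fin n₃,
          (X i₁ i₂ i₃ - Y i₁ i₂ i₃) ^ 2) := by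
  simpa only [frobeniusDist, Real.norm_eq_abs, sq_abs] using!
    best_tucker_approximation_exists_general r₁ r₂ r₃ X
end
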